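/- Lovász Local Lemma application to disjunct codes: suppose events E₁,…,E_T each occur with probability at most p', and each E_i is mutually independent of all but at most d = C(N,m+1) − C(N−(m+1),m+1) − 1 other events. If e·p'·(d+1) < 1, then with positive probability none of the events occur; consequently there exists a symmetric m-disjunct code of size N and length n whenever e·p'·(C(N,m+1) − C(N−(m+1),m+1)) < 1 with p' = (m+1)(2^{m+1}−2)^n/2^{n(m+1)} an upper bound on each bad-event probability. -/

import Mathlib

/-!
The proof is the counting form of the symmetric Lovász Local Lemma on the uniform space of all
families of `N` binary words of length `n`.

* `local_lemma`: for events `A i` with `|A i ∩ B| ≤ p |B|` whenever `B` avoids only events outside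
  the neighbourhood `Γ i`, and `e p |Γ i| < 1`, some point lies in no event. The induction shows
  `P(A i | no event of S) ≤ x` with `x = e p`. Taking `x = e p` rather than `1 / (d + 1)` keeps
  `x < 1` also when `d = 0`; the condition `p ≤ x (1 - x) ^ d` is then `1 ≤ e (1 - x) ^ d`.
* `card_mul_card_of_dependsOn`: events that depend on disjoint sets of coordinates are independent,
  by the involution of `Ω × Ω` exchanging the coordinates outside a set `M`.
* `card_covered_le`: a codeword `y` of an `s`-set `M` is included in the ternary sum of the others
  only if in every coordinate it agrees with some other member of `M`, which fails for `2` of the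
  `2 ^ s` patterns in each coordinate. A union bound over `y ∈ M` gives `p'`.

The neighbourhood of `M` consists of the `s`-sets meeting `M`, so has
`N.choose s - (N - s).choose s` members.
-/

/-- Ternary addition on {0,1,2}: 0+0=0, 1+1=1, otherwise 2. -/
def tadd (a b : Fin 3) : Fin 3 :=
  if a = 0 ∧ b = 0 then 0 else if a = 1 ∧ b = 1 then 1 else 2

/-- Componentwise ternary addition on ternary vectors. -/
def tvadd {n : ℕ} (x y : Fin n → Fin 3) : Fin n → Fin 3 := fun i => tadd (x i) (y i)

/-- Embedding of a binary symbol into the ternary alphabet. -/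
def emb : Fin 2 → Fin 3 := fun a => if a = 0 then (0 : Fin 3) else 1

/-- Embedding of binary vectors into ternary vectors. -/
def embv {n : ℕ} (x : Fin n → Fin 2) : Fin n → Fin 3 := fun i => emb (x i)

/-- `incl x y` : `y` is included in `x`, i.e. `x + y = x`. -/
def incl {n : ℕ} (x y : Fin n → Fin 3) : Prop := tvadd x y = x

instance {n : ℕ} (x y : Fin n → Fin 3) : Decidable (incl x y) :=
  inferInstanceAs (Decidable (tvadd x y = x))

/-- Ternary sum `g 0 + g 1 + ⋯ + g m` of `m+1` ternary vectors. -/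
def vsum {n m : ℕ} (g : Fin (m + 1) → Fin n → Fin 3) : Fin n → Fin 3 :=
  (List.ofFn fun j : Fin m => g j.succ).foldl tvadd (g 0)

open Finset

/-! ### The symmetric Lovász Local Lemma, counting form -/

/-- The analytic estimate `(1 - 1 / (d + 1)) ^ d ≥ 1 / e`, in a form that includes `d = 0`. -/
lemma one_le_exp_mul_pow (d : ℕ) (x : ℝ) (hx : x * ((d : ℝ) + 1) ≤ 1) :
    1 ≤ Real.exp 1 * (1 - x) ^ d := by
  rcases Nat.eq_zero_or_pos d with rfl | hd
  · simp
  have hd' : (0 : ℝ) < d := by exact_mod_cast hd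
  have h1 : (1 / (d : ℝ)) + 1 ≤ Real.exp (1 / d) := Real.add_one_le_exp _
  have hx1 : (d : ℝ) / (d + 1) ≤ 1 - x := by
    rw [div_le_iff₀ (by positivity)]
    linarith
  have h2 : 1 ≤ Real.exp (1 / d) * (1 - x) := by
    calc (1 : ℝ) = (1 / (d : ℝ) + 1) * (d / (d + 1)) := by field_simp; ring
      _ ≤ Real.exp (1 / d) * (1 - x) := by gcongr
  have h3 : Real.exp 1 = Real.exp (1 / d) ^ d := by
    rw [← Real.exp_nat_mul]
    congr 1
    field_simp
  rw [h3, ← mul_pow]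
  exact one_le_pow₀ h2

section LocalLemma

variable {Ω ι : Type*} [Fintype Ω] [DecidableEq ι]

open Classical in
/-- The number of points of `Ω` lying in no event `A i` with `i ∈ S`. -/
noncomputable def avoidCount (A : ι → Ω → Prop) (S : Finset ι) : ℝ :=
  #{ω | ∀ i ∈ S, ¬ A i ω}

open Classical in
/-- The number of points of `Ω` lying in `A i` but in no event `A j` with `j ∈ S`. -/
noncomputable def hitCount (A : ι → Ω → Prop) (i : ι) (S : Finset ι) : ℝ :=
  #{ω | A i ω ∧ ∀ j ∈ S, ¬ A j ω}

lemma avoidCount_insert (A : ι → Ω → Prop) (i : ι) (S : Finset ι) :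
    avoidCount A (insert i S) = avoidCount A S - hitCount A i S := by
  classical
  unfold avoidCount hitCount
  rw [eq_sub_iff_add_eq, ← Nat.cast_add, Nat.cast_inj]
  rw [← card_filter_add_card_filter_not (s := {ω | ∀ i ∈ S, ¬ A i ω}) (fun ω => ¬ A i ω),
    filter_filter, filter_filter]
  congr 2 <;> ext ω <;> simp [and_comm]

/-- Removing events one at a time: if each event hits at most a fraction `x` of the points left
over by smaller families, avoiding the events of `T` as well costs a factor at most
`(1 - x) ^ #T`. -/
lemma avoidCount_union_ge (A : ι → Ω → Prop) (x : ℝ) (hx1 : x ≤ 1) (S T : Finset ι)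
    (h : ∀ j ∈ T, ∀ U ⊆ T, j ∉ U → hitCount A j (U ∪ S) ≤ x * avoidCount A (U ∪ S)) :
    (1 - x) ^ #T * avoidCount A S ≤ avoidCount A (T ∪ S) := by
  induction T using Finset.induction_on with
  | empty => simp
  | insert j T hj ih =>
    have h1 := ih fun i hi U hU hiU =>
      h i (mem_insert_of_mem hi) U (hU.trans (subset_insert _ _)) hiU
    have h2 := h j (mem_insert_self _ _) T (subset_insert _ _) hj
    rw [insert_union, avoidCount_insert, card_insert_of_notMem hj, pow_succ]
    have h3 := mul_le_mul_of_nonneg_left h1 (sub_nonneg.2 hx1)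
    linarith

/-- The symmetric Lovász Local Lemma for the counting measure, with the independence hypothesis
replaced by the inequality `P(A i ∩ B) ≤ p P(B)` that the proof uses. The set `Γ i` contains `i`
itself, so `d + 1` is a bound on its size. -/
lemma local_lemma [Nonempty Ω] (A : ι → Ω → Prop) (I : Finset ι) (Γ : ι → Finset ι)
    (p : ℝ) (d : ℕ) (hp : 0 ≤ p) (hpd : Real.exp 1 * p * ((d : ℝ) + 1) < 1)
    (hself : ∀ i ∈ I, i ∈ Γ i) (hcard : ∀ i ∈ I, #(Γ i) ≤ d + 1)
    (hind : ∀ i ∈ I, ∀ S ⊆ I, Disjoint S (Γ i) → hitCount A i S ≤ p * avoidCount A S) :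
    ∃ ω, ∀ i ∈ I, ¬ A i ω := by
  classical
  set x := Real.exp 1 * p with hx
  have hx0 : 0 ≤ x := by positivity
  have hx1 : x < 1 := by
    have := mul_nonneg hx0 (Nat.cast_nonneg (α := ℝ) d)
    linarith
  have hpx : p ≤ x * (1 - x) ^ d := by
    have := mul_le_mul_of_nonneg_left (one_le_exp_mul_pow d x hpd.le) hp
    rw [hx] at this ⊢
    linarith
  have nn : ∀ S, 0 ≤ avoidCount A S := fun S => Nat.cast_nonneg _
  have key : ∀ c : ℕ, ∀ S ⊆ I, #S = c → ∀ i ∈ I, hitCount A i S ≤ x * avoidCount A S := by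
    intro c
    induction c using Nat.strong_induction_on with
    | _ c ih =>
    intro S hS hc i hi
    by_cases hiS : i ∈ S
    · have : hitCount A i S = 0 := by
        unfold hitCount
        rw [Nat.cast_eq_zero, card_eq_zero, filter_eq_empty_iff]
        exact fun ω _ h => h.2 i hiS h.1
      rw [this]
      exact mul_nonneg hx0 (nn S)
    have hU : S ∩ Γ i ∪ S \ Γ i = S := by
      ext j; simp only [mem_union, mem_inter, mem_sdiff]; tauto
    have hcd : #(S ∩ Γ i) ≤ d := by
      have h1 : S ∩ Γ i ⊂ Γ i :=
        ⟨inter_subset_right, fun h => hiS (mem_inter.1 (h (hself i hi))).1⟩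
      have := card_lt_card h1
      have := hcard i hi
      omega
    have hlow := avoidCount_union_ge A x hx1.le (S \ Γ i) (S ∩ Γ i) (by
      intro j hj U hUs hjU
      have hss : U ∪ S \ Γ i ⊂ S := by
        refine ⟨union_subset (hUs.trans inter_subset_left) sdiff_subset, fun h => ?_⟩
        have := h (mem_inter.1 hj).1
        simp only [mem_union, mem_sdiff] at this
        rw [mem_inter] at hj
        tauto
      exact ih _ (hc ▸ card_lt_card hss) _ (hss.1.trans hS) rfl j (hS (mem_inter.1 hj).1))
    rw [hU] at hlow
    have hmono : hitCount A i S ≤ hitCount A i (S \ Γ i) := by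
      unfold hitCount
      refine Nat.cast_le.2 (card_le_card fun ω hω => ?_)
      simp only [mem_filter, mem_univ, true_and, mem_sdiff] at hω ⊢
      exact ⟨hω.1, fun j hj => hω.2 j hj.1⟩
    have hpow : (1 - x) ^ d ≤ (1 - x) ^ #(S ∩ Γ i) :=
      pow_le_pow_of_le_one (by linarith) (by linarith) hcd
    calc hitCount A i S ≤ hitCount A i (S \ Γ i) := hmono
      _ ≤ p * avoidCount A (S \ Γ i) :=
        hind i hi _ (sdiff_subset.trans hS) sdiff_disjoint
      _ ≤ x * (1 - x) ^ d * avoidCount A (S \ Γ i) :=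
        mul_le_mul_of_nonneg_right hpx (nn _)
      _ ≤ x * ((1 - x) ^ #(S ∩ Γ i) * avoidCount A (S \ Γ i)) := by
        rw [mul_assoc]
        exact mul_le_mul_of_nonneg_left (mul_le_mul_of_nonneg_right hpow (nn _)) hx0
      _ ≤ x * avoidCount A S := mul_le_mul_of_nonneg_left hlow hx0
  have hfin := avoidCount_union_ge A x hx1.le ∅ I (by
    intro j hj U hU _
    rw [union_empty]
    exact key _ U hU rfl j hj)
  have hpos : 0 < avoidCount A I := by
    rw [union_empty] at hfin
    refine lt_of_lt_of_le (mul_pos (pow_pos (by linarith) _) ?_) hfin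
    simp [avoidCount, Fintype.card_pos]
  unfold avoidCount at hpos
  obtain ⟨ω, hω⟩ := card_pos.1 (Nat.cast_pos.1 hpos)
  exact ⟨ω, (mem_filter.1 hω).2⟩

end LocalLemma

/-! ### Independence in product spaces -/

open Classical in
/-- Independence of events that depend on complementary sets of coordinates. -/
lemma card_mul_card_of_dependsOn {α V : Type*} [Fintype α] [DecidableEq α] [Fintype V]
    (M : Finset α) (P Q : (α → V) → Prop)
    (hP : DependsOn P (M : Set α)) (hQ : DependsOn Q ((M : Set α)ᶜ)) :
    #{ω | P ω ∧ Q ω} * Fintype.card (α → V) = #{ω | P ω} * #{ω | Q ω} := by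
  rw [← card_univ, ← card_product, ← card_product]
  let φ : (α → V) × (α → V) → (α → V) × (α → V) :=
    fun q => (M.piecewise q.1 q.2, M.piecewise q.2 q.1)
  have hφ : ∀ q, φ (φ q) = q := by
    rintro ⟨a, b⟩
    ext z <;> by_cases hz : z ∈ M <;> simp [φ, Finset.piecewise, hz]
  have hPφ : ∀ a b, P (M.piecewise a b) = P a := fun a b =>
    hP fun z hz => by simp [Finset.piecewise, mem_coe.1 hz]
  have hQφ : ∀ a b, Q (M.piecewise a b) = Q b := fun a b =>
    hQ fun z hz => by
      have hz' : z ∉ M := fun h => hz (mem_coe.2 h)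
      simp [Finset.piecewise, hz']
  refine card_bij' (fun q _ => φ q) (fun q _ => φ q) ?_ ?_ (fun q _ => hφ q) (fun q _ => hφ q)
  · rintro ⟨a, b⟩ h
    simp only [mem_product, mem_filter, mem_univ, true_and, and_true] at h
    simp only [φ, mem_product, mem_filter, mem_univ, true_and, hPφ, hQφ]
    exact h
  · rintro ⟨a, b⟩ h
    simp only [mem_product, mem_filter, mem_univ, true_and] at h
    simp only [φ, mem_product, mem_filter, mem_univ, true_and, and_true, hPφ, hQφ]
    exact h

/-! ### Probability of the bad events -/

/-- Word `y` agrees in every coordinate with some other word of `M`; this is what inclusion of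
word `y` in the ternary sum of the other words of `M` amounts to. -/
def Covered {n N : ℕ} (M : Finset (Fin N)) (y : Fin N) (C : Fin N → Fin n → Fin 2) : Prop :=
  ∀ i, ∃ z ∈ M.erase y, C z i = C y i

/-- The bad event of `M`: some word of `M` is covered by the others. -/
def Bad {n N : ℕ} (M : Finset (Fin N)) (C : Fin N → Fin n → Fin 2) : Prop :=
  ∃ y ∈ M, Covered M y C

lemma dependsOn_bad {n N : ℕ} (M : Finset (Fin N)) :
    DependsOn (Bad (n := n) M) (M : Set (Fin N)) := by
  intro C C' h
  have h' : ∀ z ∈ M, C z = C' z := fun z hz => h z (mem_coe.2 hz)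
  refine propext (exists_congr fun y => and_congr_right fun hy => forall_congr' fun i =>
    exists_congr fun z => and_congr_right fun hz => ?_)
  rw [h' y hy, h' z (mem_of_mem_erase hz)]

/-- In a single coordinate, at least `2 * 2 ^ (N - #M)` patterns give all words of
`M.erase y` the symbol opposite to that of `y`. -/
lemma card_column_le {N : ℕ} (M : Finset (Fin N)) (y : Fin N) (hy : y ∈ M) :
    #{c : Fin N → Fin 2 | ∃ z ∈ M.erase y, c z = c y} + 2 * 2 ^ (N - #M) ≤ 2 ^ N := by
  classical
  -- `F a` is the set of patterns giving `y` the symbol `a` and the rest of `M` the opposite one.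
  let F : Fin 2 → Finset (Fin N → Fin 2) := fun a =>
    Fintype.piFinset fun z => if z ∈ M then {if z = y then a else a + 1} else univ
  have hF : ∀ a, #(F a) = 2 ^ (N - #M) := by
    intro a
    have : ∀ z, #(if z ∈ M then {if z = y then a else a + 1} else (univ : Finset (Fin 2)))
        = if z ∈ M then 1 else 2 := by
      intro z; split_ifs <;> simp
    simp only [F, Fintype.card_piFinset, this, prod_ite, prod_const, one_pow, one_mul]
    congr 1
    rw [filter_not, card_sdiff_of_subset (filter_subset _ _)]
    simp
  have hFm : ∀ a c, c ∈ F a → ∀ z ∈ M, c z = if z = y then a else a + 1 := by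
    intro a c hc z hz
    simpa [hz] using Fintype.mem_piFinset.1 hc z
  have hdisj : Disjoint (F 0) (F 1) := by
    rw [disjoint_left]
    intro c h0 h1
    have e0 := hFm 0 c h0 y hy
    have e1 := hFm 1 c h1 y hy
    simp_all
  have hdisj2 : Disjoint ({c : Fin N → Fin 2 | ∃ z ∈ M.erase y, c z = c y} : Finset _)
      (F 0 ∪ F 1) := by
    rw [disjoint_left]
    intro c hc hc'
    obtain ⟨z, hz, hzy⟩ := (mem_filter.1 hc).2
    rw [mem_erase] at hz
    have : ∃ a, c ∈ F a := by
      rcases mem_union.1 hc' with h | h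
      exacts [⟨_, h⟩, ⟨_, h⟩]
    obtain ⟨a, ha⟩ := this
    have e1 := hFm a c ha z hz.2
    have e2 := hFm a c ha y hy
    rw [if_neg hz.1] at e1
    rw [if_pos rfl] at e2
    rw [e1, e2] at hzy
    clear ha e1 e2
    revert hzy
    revert a
    decide
  have := card_le_univ (({c : Fin N → Fin 2 | ∃ z ∈ M.erase y, c z = c y} : Finset _)
      ∪ (F 0 ∪ F 1))
  rw [card_union_of_disjoint hdisj2, card_union_of_disjoint hdisj, hF, hF] at this
  simp only [Fintype.card_pi, Fintype.card_fin, prod_const, card_univ] at this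
  omega

open Classical in
lemma card_covered_le {n N s : ℕ} (M : Finset (Fin N)) (hM : #M = s) (y : Fin N) (hy : y ∈ M) :
    (#{C : Fin N → Fin n → Fin 2 | Covered M y C} : ℝ)
      ≤ ((2 : ℝ) ^ s - 2) ^ n / 2 ^ (n * s) * (2 ^ n) ^ N := by
  set K : Finset (Fin N → Fin 2) := {c | ∃ z ∈ M.erase y, c z = c y} with hK
  have h1 : #{C : Fin N → Fin n → Fin 2 | Covered M y C} = #K ^ n := by
    rw [← Fintype.card_piFinset_const]
    refine card_bij' (fun C _ i z => C z i) (fun D _ z i => D i z) ?_ ?_ ?_ ?_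
    · intro C hC
      simpa [hK, Covered, Fintype.mem_piFinset] using hC
    · intro D hD
      simpa [hK, Covered, Fintype.mem_piFinset] using hD
    · intros; rfl
    · intros; rfl
  have hsN : s ≤ N := by simpa [hM] using card_le_univ M
  have h2 := card_column_le M y hy
  rw [hM] at h2
  have h3 : (#K : ℝ) + 2 * 2 ^ (N - s) ≤ 2 ^ N := by exact_mod_cast h2
  have h4 : (2 : ℝ) ^ N = 2 ^ (N - s) * 2 ^ s := by rw [← pow_add, Nat.sub_add_cancel hsN]
  have h5 : (#K : ℝ) ≤ ((2 : ℝ) ^ s - 2) / 2 ^ s * 2 ^ N := by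
    have : ((2 : ℝ) ^ s - 2) / 2 ^ s * 2 ^ N = 2 ^ N - 2 * 2 ^ (N - s) := by
      rw [h4]; field_simp
    linarith
  calc (#{C : Fin N → Fin n → Fin 2 | Covered M y C} : ℝ) = (#K : ℝ) ^ n := by
        rw [h1]; push_cast; rfl
    _ ≤ (((2 : ℝ) ^ s - 2) / 2 ^ s * 2 ^ N) ^ n := by gcongr
    _ = ((2 : ℝ) ^ s - 2) ^ n / 2 ^ (n * s) * (2 ^ n) ^ N := by
        rw [mul_pow, div_pow, ← pow_mul, ← pow_mul, ← pow_mul, mul_comm s n, mul_comm N n]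

open Classical in
/-- Union bound over the word `y ∈ M` that is covered. -/
lemma card_bad_le {n N s : ℕ} (M : Finset (Fin N)) (hM : #M = s) :
    (#{C : Fin N → Fin n → Fin 2 | Bad M C} : ℝ)
      ≤ (s : ℝ) * ((2 : ℝ) ^ s - 2) ^ n / 2 ^ (n * s) * (2 ^ n) ^ N := by
  have h1 : ({C : Fin N → Fin n → Fin 2 | Bad M C} : Finset _)
      ⊆ M.biUnion fun y => {C | Covered M y C} := by
    intro C hC
    obtain ⟨y, hy, hcov⟩ := (mem_filter.1 hC).2
    exact mem_biUnion.2 ⟨y, hy, mem_filter.2 ⟨mem_univ _, hcov⟩⟩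
  calc (#{C : Fin N → Fin n → Fin 2 | Bad M C} : ℝ)
      ≤ ∑ y ∈ M, (#{C : Fin N → Fin n → Fin 2 | Covered M y C} : ℝ) := by
        exact_mod_cast (card_le_card h1).trans card_biUnion_le
    _ ≤ ∑ y ∈ M, ((2 : ℝ) ^ s - 2) ^ n / 2 ^ (n * s) * (2 ^ n) ^ N :=
        sum_le_sum fun y hy => card_covered_le M hM y hy
    _ = _ := by
        rw [sum_const, hM, nsmul_eq_mul]
        ring

/-! ### Inclusion in ternary sums -/

lemma foldl_tvadd_apply {n : ℕ} (i : Fin n) (a : Fin 2) (l : List (Fin n → Fin 3))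
    (g : Fin n → Fin 3) (hg : g i = emb a) (hl : ∀ v ∈ l, v i = emb a) :
    l.foldl tvadd g i = emb a := by
  induction l generalizing g with
  | nil => simpa using hg
  | cons v l ih =>
    rw [List.foldl_cons]
    refine ih _ ?_ fun w hw => hl w (List.mem_cons_of_mem _ hw)
    rw [tvadd, hg, hl v List.mem_cons_self]
    have hidem : ∀ a, tadd (emb a) (emb a) = emb a := by decide
    exact hidem a

/-- If a binary word is included in a ternary sum of binary words, then in every coordinate it
agrees with a summand: otherwise all summands share the opposite symbol there. -/
lemma exists_eq_of_incl {n m : ℕ} (g : Fin (m + 1) → Fin n → Fin 2) (y : Fin n → Fin 2)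
    (h : incl (vsum fun j => embv (g j)) (embv y)) (i : Fin n) : ∃ j, g j i = y i := by
  by_contra! hne
  have hbin : ∀ a b : Fin 2, a ≠ b → a = b + 1 := by decide
  have hg : ∀ j, g j i = y i + 1 := fun j => hbin _ _ (hne j)
  have hs : vsum (fun j => embv (g j)) i = emb (y i + 1) := by
    refine foldl_tvadd_apply i _ _ _ (by simp [embv, hg]) ?_
    intro v hv
    obtain ⟨j, rfl⟩ := (List.mem_ofFn' _ _).1 hv
    simp [embv, hg]
  have := congrFun h i
  rw [tvadd, hs, embv] at this
  generalize y i = a at this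
  revert a
  decide

/-- Consequence of the Lovász Local Lemma for symmetric disjunct codes (m = k+1 ≥ 2
codewords summed, m+1 = k+2 codewords per bad event): if
e · p' · (C(N,m+1) − C(N−(m+1),m+1)) < 1, where p' = (m+1)(2^(m+1)−2)^n / 2^(n(m+1)),
then there exist N binary codewords of length n such that no codeword among any m+1
distinct codewords is included in the ternary sum of the other m; i.e. a symmetric
m-disjunct code of size N and length n exists. -/
theorem disjunct_code_exists (n N k : ℕ)
    (h : Real.exp 1 *
        (((k : ℝ) + 2) * ((2 : ℝ) ^ (k + 2) - 2) ^ n / (2 : ℝ) ^ (n * (k + 2))) *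
        ((N.choose (k + 2) : ℝ) - ((N - (k + 2)).choose (k + 2) : ℝ)) < 1) :
    ∃ C : Fin N → Fin n → Fin 2,
      ∀ f : Fin (k + 2) → Fin N, Function.Injective f →
        ¬ incl (vsum fun j : Fin (k + 1) => embv (C (f j.succ))) (embv (C (f 0))) := by
  classical
  -- With fewer than `k + 2` words there is no injection `f`.
  rcases lt_or_ge N (k + 2) with hN | hN
  · refine ⟨fun _ _ => 0, fun f hf => absurd (Fintype.card_le_of_injective f hf) ?_⟩
    simpa using hN
  set s := k + 2 with hs
  have hs2 : (s : ℝ) = (k : ℝ) + 2 := by rw [hs]; push_cast; rfl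
  set p : ℝ := (s : ℝ) * ((2 : ℝ) ^ s - 2) ^ n / 2 ^ (n * s) with hp
  rw [← hs2] at h
  have hp0 : 0 ≤ p := by
    have : (2 : ℝ) ≤ 2 ^ s := by
      simpa using pow_le_pow_right₀ (one_le_two (α := ℝ)) (show 1 ≤ s by omega)
    have : (0 : ℝ) ≤ 2 ^ s - 2 := by linarith
    positivity
  let I : Finset (Finset (Fin N)) := powersetCard s univ
  let Γ : Finset (Fin N) → Finset (Finset (Fin N)) := fun M => I \ powersetCard s Mᶜ
  have hΓ : ∀ M ∈ I, #(Γ M) = N.choose s - (N - s).choose s := by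
    intro M hM
    have hMs : #M = s := (mem_powersetCard.1 hM).2
    rw [card_sdiff_of_subset (powersetCard_mono (subset_univ _))]
    simp [card_compl, hMs]
  have hself : ∀ M ∈ I, M ∈ Γ M := by
    intro M hM
    refine mem_sdiff.2 ⟨hM, fun h' => ?_⟩
    obtain ⟨hsub, hMs⟩ := mem_powersetCard.1 h'
    obtain ⟨z, hz⟩ := card_pos.1 (show 0 < #M by omega)
    exact mem_compl.1 (hsub hz) hz
  obtain ⟨d, hd⟩ : ∃ d, N.choose s - (N - s).choose s = d + 1 := by
    obtain ⟨M, -, hM⟩ := exists_subset_card_eq (s := (univ : Finset (Fin N))) (n := s)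
      (by simpa using hN)
    have hMI : M ∈ I := mem_powersetCard.2 ⟨subset_univ _, hM⟩
    exact Nat.exists_eq_succ_of_ne_zero
      (hΓ M hMI ▸ (card_pos.2 ⟨M, hself M hMI⟩).ne')
  have hle : (N - s).choose s ≤ N.choose s := Nat.choose_le_choose s (Nat.sub_le _ _)
  rw [← Nat.cast_sub hle, hd, show ((d + 1 : ℕ) : ℝ) = (d : ℝ) + 1 from Nat.cast_succ d] at h
  obtain ⟨C, hC⟩ := local_lemma (Ω := Fin N → Fin n → Fin 2) Bad I Γ p d hp0 h hself
    (fun M hM => (hΓ M hM).trans hd |>.le) (by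
      intro M hM S hS hdis
      have hMs : #M = s := (mem_powersetCard.1 hM).2
      have hind := card_mul_card_of_dependsOn M (Bad (n := n) M)
        (fun C => ∀ M' ∈ S, ¬ Bad M' C) (dependsOn_bad M) (by
          intro C C' hCC
          refine propext (forall_congr' fun M' => forall_congr' fun hM' => not_congr
            (iff_of_eq (dependsOn_bad M' fun z hz => hCC z fun hzM => ?_)))
          have h1 : M' ∈ powersetCard s Mᶜ := by
            by_contra hcon
            exact disjoint_left.1 hdis hM' (mem_sdiff.2 ⟨hS hM', hcon⟩)
          exact mem_compl.1 ((mem_powersetCard.1 h1).1 (mem_coe.1 hz)) (mem_coe.1 hzM))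
      have hindR : hitCount (Bad (n := n)) M S * ((2 : ℝ) ^ n) ^ N
          = (#{C : Fin N → Fin n → Fin 2 | Bad M C} : ℝ) * avoidCount (Bad (n := n)) S := by
        simp only [hitCount, avoidCount]
        have hc : Fintype.card (Fin N → Fin n → Fin 2) = (2 ^ n) ^ N := by simp
        rw [hc] at hind
        norm_cast
        convert hind
      have hb := card_bad_le (n := n) M hMs
      have hpos : (0 : ℝ) < (2 ^ n) ^ N := by positivity
      refine le_of_mul_le_mul_right ?_ hpos
      rw [hindR]
      calc _ ≤ p * (2 ^ n) ^ N * avoidCount Bad S :=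
            mul_le_mul_of_nonneg_right hb (Nat.cast_nonneg _)
        _ = _ := by ring)
  refine ⟨C, fun f hf hincl => ?_⟩
  have hfI : univ.image f ∈ I :=
    mem_powersetCard.2 ⟨subset_univ _, by rw [card_image_of_injective _ hf]; simp [hs]⟩
  refine hC _ hfI ⟨f 0, by simp, fun i => ?_⟩
  obtain ⟨j, hj⟩ := exists_eq_of_incl (fun j : Fin (k + 1) => C (f j.succ)) (C (f 0)) hincl i
  exact ⟨f j.succ, mem_erase.2 ⟨fun he => Fin.succ_ne_zero j (hf he), by simp⟩, hj⟩
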